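/- Let E be a normal p-subgroup of a finite group G. Then E is contained in the U-hypercentre Z_U(G) (i.e., every chief factor of G below E is cyclic) if and only if the quotient G/C_G(E) satisfies: its smallest normal subgroup with abelian quotient of exponent dividing p−1 is contained in O_p(G/C_G(E)). -/

import Mathlib

/-- `K < N` is a chief factor of `G`: both are normal and there is no normal
subgroup strictly between them. -/
def IsChiefFactor (G : Type*) [Group G] (K N : Subgroup G) : Prop :=
  K.Normal ∧ N.Normal ∧ K < N ∧
    ∀ L : Subgroup G, L.Normal → K ≤ L → L ≤ N → L = K ∨ L = N

/-- The factor `N/K` is cyclic: it is generated by a single coset. -/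
def CyclicFactor {G : Type*} [Group G] (K N : Subgroup G) : Prop :=
  ∃ g ∈ N, ∀ x ∈ N, ∃ n : ℤ, (g ^ n)⁻¹ * x ∈ K

/-- The `𝔘`-hypercentre of `G`: the product of all normal subgroups `N` of `G`
such that all chief factors of `G` below `N` are cyclic. -/
def UHypercentre (G : Type*) [Group G] : Subgroup G :=
  ⨆ N ∈ {N : Subgroup G | N.Normal ∧
      ∀ K L : Subgroup G, IsChiefFactor G K L → L ≤ N → CyclicFactor K L}, N

theorem chief_inf {G : Type*} [Group G] {K L X : Subgroup G} (h : IsChiefFactor G K L)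
    (hX : X.Normal) (hL : L ≤ K ⊔ (L ⊓ X)) : IsChiefFactor G (K ⊓ X) (L ⊓ X) := by
  obtain ⟨hK, hLn, hlt, hc⟩ := h
  refine ⟨inferInstance, inferInstance, lt_of_le_of_ne (inf_le_inf_right X hlt.le) ?_, ?_⟩
  · intro he
    apply hlt.not_ge
    exact hL.trans (sup_le le_rfl (he ▸ inf_le_left))
  · intro Y hY h1 h2
    rcases hc (K ⊔ Y) inferInstance le_sup_left
      (sup_le hlt.le (h2.trans inf_le_left)) with he | he
    · left
      refine le_antisymm (le_inf ?_ (h2.trans inf_le_right)) h1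
      rw [← he]; exact le_sup_right
    · right
      refine le_antisymm h2 ?_
      intro z hz
      have hz' : z ∈ K ⊔ Y := he ▸ hz.1
      obtain ⟨k, hk, y, hy, rfl⟩ := Subgroup.mem_sup_of_normal_left.1 hz'
      have : k ∈ X := by
        have := X.mul_mem hz.2 (X.inv_mem (h2 hy).2)
        simpa using this
      exact Y.mul_mem (h1 ⟨hk, this⟩) hy

theorem cyclic_inf {G : Type*} [Group G] {K L X : Subgroup G} (hK : K.Normal)
    (hL : L ≤ K ⊔ (L ⊓ X)) (h : CyclicFactor (K ⊓ X) (L ⊓ X)) : CyclicFactor K L := by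
  obtain ⟨g, hg, h⟩ := h
  refine ⟨g, hg.1, fun x hx => ?_⟩
  obtain ⟨k, hk, z, hz, rfl⟩ := Subgroup.mem_sup_of_normal_left.1 (hL hx)
  obtain ⟨n, hn⟩ := h z hz
  refine ⟨n, ?_⟩
  have h1 := hK.conj_mem k hk (g ^ n)⁻¹
  have := K.mul_mem h1 hn.1
  simpa [mul_assoc] using this

theorem chief_sup {G : Type*} [Group G] {K L N : Subgroup G} (h : IsChiefFactor G K L)
    (hN : N.Normal) (hL : L ⊓ N ≤ K) : IsChiefFactor G (K ⊔ N) (L ⊔ N) := by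
  obtain ⟨hK, hLn, hlt, hc⟩ := h
  refine ⟨inferInstance, inferInstance, lt_of_le_of_ne (sup_le_sup_right hlt.le N) ?_, ?_⟩
  · intro he
    apply hlt.not_ge
    intro l hl
    have hl' : l ∈ K ⊔ N := he ▸ (le_sup_left : L ≤ L ⊔ N) hl
    obtain ⟨k, hk, n, hn, rfl⟩ := Subgroup.mem_sup_of_normal_left.1 hl'
    refine K.mul_mem hk (hL ⟨?_, hn⟩)
    have := L.mul_mem (L.inv_mem (hlt.le hk)) hl
    simpa using this
  · intro Y hY h1 h2
    rcases hc (L ⊓ Y) inferInstance (le_inf hlt.le (le_sup_left.trans h1)) inf_le_left with he | he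
    · left
      refine le_antisymm ?_ h1
      intro y hy
      obtain ⟨l, hl, n, hn, rfl⟩ := Subgroup.mem_sup_of_normal_left.1 (h2 hy)
      have : l ∈ Y := by
        have := Y.mul_mem hy (Y.inv_mem ((le_sup_right.trans h1) hn))
        simpa using this
      exact Subgroup.mul_mem_sup (he ▸ (⟨hl, this⟩ : l ∈ L ⊓ Y)) hn
    · right
      refine le_antisymm h2 (sup_le ?_ (le_sup_right.trans h1))
      rw [← he]; exact inf_le_right

theorem cyclic_sup {G : Type*} [Group G] {K L N : Subgroup G} (hK : K.Normal) (hLn : L.Normal)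
    (hKL : K ≤ L) (hN : N.Normal)
    (hL : L ⊓ N ≤ K) (h : CyclicFactor (K ⊔ N) (L ⊔ N)) : CyclicFactor K L := by
  obtain ⟨g, hg, h⟩ := h
  obtain ⟨l, hl, n, hn, rfl⟩ := Subgroup.mem_sup_of_normal_left.1 hg
  refine ⟨l, hl, fun x hx => ?_⟩
  obtain ⟨m, hm⟩ := h x ((le_sup_left : L ≤ L ⊔ N) hx)
  refine ⟨m, ?_⟩
  have e : ((l * n : G) : G ⧸ (K ⊔ N)) = (l : G ⧸ (K ⊔ N)) := by
    symm
    rw [QuotientGroup.eq]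
    simpa using (le_sup_right : N ≤ K ⊔ N) hn
  have hx' : (l ^ m)⁻¹ * x ∈ K ⊔ N := by
    rw [← QuotientGroup.eq] at hm ⊢
    rw [← hm, QuotientGroup.mk_zpow, QuotientGroup.mk_zpow, e]
  have hxL : (l ^ m)⁻¹ * x ∈ L := L.mul_mem (L.inv_mem (L.zpow_mem hl m)) hx
  obtain ⟨k, hk, n', hn', he⟩ := Subgroup.mem_sup_of_normal_left.1 hx'
  rw [← he] at hxL ⊢
  refine K.mul_mem hk (hL ⟨?_, hn'⟩)
  have := L.mul_mem (L.inv_mem (hKL hk)) hxL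
  simpa using this

def UEmb (G : Type*) [Group G] (N : Subgroup G) : Prop :=
  N.Normal ∧ ∀ K L : Subgroup G, IsChiefFactor G K L → L ≤ N → CyclicFactor K L

theorem UEmb.sup {G : Type*} [Group G] {N M : Subgroup G} (hN : UEmb G N) (hM : UEmb G M) :
    UEmb G (N ⊔ M) := by
  obtain ⟨hNn, hN⟩ := hN
  obtain ⟨hMn, hM⟩ := hM
  refine ⟨inferInstance, fun K L h hL => ?_⟩
  have h' := h
  obtain ⟨hK, hLn, hlt, hc⟩ := h'
  rcases hc (K ⊔ (L ⊓ N)) inferInstance le_sup_left (sup_le hlt.le inf_le_left) with he | he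
  · have hLN : L ⊓ N ≤ K := he ▸ le_sup_right
    refine cyclic_sup hK hLn hlt.le hNn hLN ?_
    have h2 := chief_sup h hNn hLN
    have h3 : L ⊔ N ≤ (K ⊔ N) ⊔ ((L ⊔ N) ⊓ M) := by
      intro x hx
      have hx' : x ∈ N ⊔ M := (sup_le hL le_sup_left) hx
      obtain ⟨n, hn, m, hm, rfl⟩ := Subgroup.mem_sup_of_normal_left.1 hx'
      refine Subgroup.mul_mem_sup ((le_sup_right : N ≤ K ⊔ N) hn) ⟨?_, hm⟩
      have := (L ⊔ N).mul_mem ((L ⊔ N).inv_mem ((le_sup_right : N ≤ L ⊔ N) hn)) hx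
      simpa using this
    exact cyclic_inf inferInstance h3 (hM _ _ (chief_inf h2 hMn h3) inf_le_right)
  · exact cyclic_inf hK he.ge (hN _ _ (chief_inf h hNn he.ge) inf_le_right)

theorem uEmb_of_le {G : Type*} [Group G] [Finite G] {E : Subgroup G} (hE : E ≤ UHypercentre G) :
    ∀ K L : Subgroup G, IsChiefFactor G K L → L ≤ E → CyclicFactor K L := by
  have hne : {N : Subgroup G | UEmb G N}.Nonempty := by
    refine ⟨⊥, inferInstance, fun K L h hL => ?_⟩
    exact absurd (lt_of_lt_of_le h.2.2.1 hL) not_lt_bot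
  obtain ⟨N, hN⟩ := (Set.toFinite _).exists_maximal hne
  have : UHypercentre G ≤ N := by
    refine iSup₂_le fun M hM => ?_
    have hM' : UEmb G M := hM
    exact le_sup_right.trans (hN.2 (UEmb.sup hN.1 hM') le_sup_left)
  intro K L h hL
  exact hN.1.2 K L h (hL.trans (hE.trans this))

/-- No proper nontrivial invariant subgroups. -/
def Irr {G V : Type*} [Group G] [Group V] (φ : G →* MulAut V) : Prop :=
  ∀ W : Subgroup V, (∀ g, ∀ w ∈ W, φ g w ∈ W) → W = ⊥ ∨ W = ⊤

theorem Irr.comm {G V : Type*} [Group G] [Group V] [Finite V] [Nontrivial V] {φ : G →* MulAut V}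
    (h : Irr φ) {p : ℕ} (hp : p.Prime) (hV : IsPGroup p V) : ∀ a b : V, a * b = b * a := by
  have := Fact.mk hp
  have := hV.center_nontrivial
  rcases h (Subgroup.center V) (fun g w hw => by
    rw [Subgroup.mem_center_iff] at hw ⊢
    intro x
    have := congrArg (φ g) (hw ((φ g).symm x))
    simpa using this) with e | e
  · rw [e] at this
    exact absurd this (by simp [not_nontrivial_iff_subsingleton]; infer_instance)
  · intro a b
    have : b ∈ Subgroup.center V := e ▸ Subgroup.mem_top b
    exact Subgroup.mem_center_iff.1 this a

theorem Irr.pow {G V : Type*} [Group G] [Group V] [Finite V] [Nontrivial V] {φ : G →* MulAut V}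
    (h : Irr φ) {p : ℕ} (hp : p.Prime) (hV : IsPGroup p V) : ∀ a : V, a ^ p = 1 := by
  have := Fact.mk hp
  have hc := h.comm hp hV
  let W : Subgroup V :=
    { carrier := {a | a ^ p = 1}
      one_mem' := by simp
      mul_mem' := by
        intro a b ha hb
        have : (a * b) ^ p = a ^ p * b ^ p := Commute.mul_pow (hc a b) p
        simp only [Set.mem_ofPred_eq] at *
        rw [this, ha, hb, one_mul]
      inv_mem' := by
        intro a ha
        simp only [Set.mem_ofPred_eq] at *
        rw [inv_pow, ha, inv_one] }
  have hd : p ∣ Nat.card V := by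
    obtain ⟨n, hn⟩ := IsPGroup.iff_card.1 hV
    have : 1 < Nat.card V := Finite.one_lt_card
    rw [hn] at this ⊢
    exact dvd_pow_self p (by rintro rfl; simp at this)
  obtain ⟨x, hx⟩ := exists_prime_orderOf_dvd_card' p hd
  rcases h W (fun g w hw => by
    change (φ g w) ^ p = 1
    have hw : w ^ p = 1 := hw
    rw [← map_pow, hw, map_one]) with e | e
  · exfalso
    have : x ∈ W := by
      change x ^ p = 1
      rw [← hx, pow_orderOf_eq_one]
    rw [e, Subgroup.mem_bot] at this
    rw [this, orderOf_one] at hx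
    exact hp.one_lt.ne hx
  · intro a
    have : a ∈ W := e ▸ Subgroup.mem_top a
    exact this

theorem Irr.cyclic_case {G V : Type*} [Group G] [Group V] [Finite V] [Nontrivial V]
    {φ : G →* MulAut V}
    (h : Irr φ) {p : ℕ} (hp : p.Prime) (hV : IsPGroup p V) (hcyc : IsCyclic V) :
    (∀ x y, φ (x * y * x⁻¹ * y⁻¹) = 1) ∧ ∀ x, φ (x ^ (p - 1)) = 1 := by
  have := Fact.mk hp
  have hcard : Nat.card V = p := by
    have h1 : Nat.card V ∣ p := by
      rw [← IsCyclic.exponent_eq_card]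
      exact Monoid.exponent_dvd_of_forall_pow_eq_one (h.pow hp hV)
    rcases (Nat.dvd_prime hp).1 h1 with e | e
    · exact absurd e Finite.one_lt_card.ne'
    · exact e
  let e := IsCyclic.mulAutMulEquiv V
  constructor
  · intro x y
    apply e.injective
    simp only [map_mul, map_inv, map_one]
    rw [mul_comm (e (φ x)) (e (φ y))]
    simp
  · intro x
    apply e.injective
    simp only [map_pow, map_one]
    generalize e (φ x) = u
    clear e
    revert u
    rw [hcard]
    exact ZMod.units_pow_card_sub_one_eq_one p

theorem eigen_add {A : Type*} [AddCommGroup A] [Finite A] [Nontrivial A] (p : ℕ) [Fact p.Prime]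
    [Module (ZMod p) A] (T : Module.End (ZMod p) A) (hT : T ^ (p - 1) = 1) :
    ∃ μ : ZMod p, ∃ v : A, v ≠ 0 ∧ T v = μ • v := by
  have hp := (Fact.out : p.Prime)
  have hs : (Polynomial.X ^ p - Polynomial.X : Polynomial (ZMod p)).Splits := by
    have := FiniteField.splits_X_pow_card_sub_X (K := ZMod p) p 
    simpa using this
  have hne : (Polynomial.X ^ p - Polynomial.X : Polynomial (ZMod p)) ≠ 0 :=
    FiniteField.X_pow_card_sub_X_ne_zero _ hp.one_lt
  have hd : minpoly (ZMod p) T ∣ Polynomial.X ^ p - Polynomial.X := by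
    apply minpoly.dvd
    have : T ^ p = T := by
      obtain ⟨m, hm⟩ : ∃ m, m = p - 1 := ⟨_, rfl⟩
      have h0 : T ^ (m + 1) = T := by rw [pow_succ, hm, hT, one_mul]
      have h1 : p = m + 1 := by have := hp.one_le; omega
      calc T ^ p = T ^ (m + 1) := congrArg (fun n : ℕ => T ^ n) h1
        _ = T := h0
    simp [this]
  obtain ⟨μ, hμ⟩ := (hs.of_dvd hne hd).exists_eval_eq_zero
    (minpoly.degree_pos (Algebra.IsIntegral.isIntegral T)).ne'
  obtain ⟨v, hv⟩ := (Module.End.hasEigenvalue_of_isRoot hμ).exists_hasEigenvector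
  exact ⟨μ, v, hv.2, hv.apply_eq_smul⟩

theorem eigen_mul {V : Type*} [Group V] [Finite V] [Nontrivial V] (p : ℕ) (hp : p.Prime)
    (hc : ∀ a b : V, a * b = b * a) (hpow : ∀ a : V, a ^ p = 1) (T : MulAut V)
    (hT : T ^ (p - 1) = 1) : ∃ k : ℕ, ∃ v : V, v ≠ 1 ∧ T v = v ^ k := by
  have := Fact.mk hp
  let : CommGroup V := { (inferInstance : Group V) with mul_comm := hc }
  let : Module (ZMod p) (Additive V) := AddCommGroup.zmodModule (n := p) (fun x => hpow x.toMul)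
  let f : Additive V →+ Additive V := MonoidHom.toAdditive (T.toMonoidHom)
  let T' : Module.End (ZMod p) (Additive V) := AddMonoidHom.toZModLinearMap p f
  have key : ∀ n : ℕ, ∀ v : V, (T' ^ n) (Additive.ofMul v) = Additive.ofMul ((T ^ n) v) := by
    intro n
    induction n with
    | zero => intro v; rfl
    | succ n ih =>
      intro v
      rw [pow_succ, pow_succ, Module.End.mul_apply, MulAut.mul_apply, ← ih]
      rfl
  have hT' : T' ^ (p - 1) = 1 := by
    ext v
    have := key (p - 1) v.toMul
    rw [hT] at this
    exact this
  obtain ⟨μ, v, hv, h⟩ := eigen_add p T' hT'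
  refine ⟨μ.val, v.toMul, hv, ?_⟩
  have h2 : μ • v = μ.val • v := by
    conv_lhs => rw [← ZMod.natCast_zmod_val μ]
    exact Nat.cast_smul_eq_nsmul (ZMod p) _ _
  rw [h2] at h
  exact h

theorem Irr.cyclic {G V : Type*} [Group G] [Group V] [Finite V] [Nontrivial V]
    {φ : G →* MulAut V}
    (h : Irr φ) {p : ℕ} (hp : p.Prime) (hV : IsPGroup p V) (P : Subgroup G) (hP : P.Normal)
    (h1 : ∀ g ∈ P, ∃ n : ℕ, φ (g ^ p ^ n) = 1)
    (h2 : ∀ x y : G, x * y * x⁻¹ * y⁻¹ ∈ P) (h3 : ∀ x : G, x ^ (p - 1) ∈ P) :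
    IsCyclic V := by
  have := Fact.mk hp
  have hc := h.comm hp hV
  have hpow := h.pow hp hV
  have hd : p ∣ Nat.card V := by
    obtain ⟨n, hn⟩ := IsPGroup.iff_card.1 hV
    have : 1 < Nat.card V := Finite.one_lt_card
    rw [hn] at this ⊢
    exact dvd_pow_self p (by rintro rfl; simp at this)
  have hQ : IsPGroup p (P.map φ) := by
    rintro ⟨_, g, hg, rfl⟩
    obtain ⟨n, hn⟩ := h1 g hg
    refine ⟨n, ?_⟩
    ext1
    simpa using hn
  -- P acts trivially
  have hPtriv : ∀ g ∈ P, φ g = 1 := by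
    let W : Subgroup V :=
      { carrier := {a | ∀ g ∈ P, φ g a = a}
        one_mem' := by simp
        mul_mem' := by
          intro a b ha hb g hg
          rw [map_mul, ha g hg, hb g hg]
        inv_mem' := by
          intro a ha g hg
          rw [map_inv, ha g hg] }
    rcases h W (fun g w hw q hq => by
      have h5 := hw (g⁻¹ * q * g) (by simpa using hP.conj_mem q hq g⁻¹)
      have h6 := congrArg (φ g) h5
      rw [← MulAut.mul_apply, ← map_mul] at h6
      rw [← MulAut.mul_apply, ← map_mul]
      convert h6 using 3
      group) with e | e
    · exfalso
      obtain ⟨b, hb, hb1⟩ := hQ.exists_fixed_point_of_prime_dvd_card_of_fixed_point V hd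
        (a := (1 : V)) (by rintro ⟨g, hg⟩; exact map_one g)
      have : b ∈ W := fun g hg => hb ⟨φ g, g, hg, rfl⟩
      rw [e, Subgroup.mem_bot] at this
      exact hb1 this.symm
    · intro g hg
      ext v
      have : v ∈ W := e ▸ Subgroup.mem_top v
      exact this g hg
  have hcomm : ∀ x y v, φ x (φ y v) = φ y (φ x v) := by
    intro x y v
    have := hPtriv _ (h2 x y)
    have h5 : φ x * φ y = φ y * φ x := by
      rw [map_mul, map_mul, map_mul, map_inv, map_inv, mul_inv_eq_one, mul_inv_eq_iff_eq_mul] at this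
      exact this
    exact congrArg (fun f : MulAut V => f v) h5
  have hscal : ∀ g, ∃ k : ℕ, ∀ v, φ g v = v ^ k := by
    intro g
    obtain ⟨k, v, hv, hk⟩ := eigen_mul p hp hc hpow (φ g) (by
      rw [← map_pow]; exact hPtriv _ (h3 g))
    refine ⟨k, ?_⟩
    let W : Subgroup V :=
      { carrier := {a | φ g a = a ^ k}
        one_mem' := by simp
        mul_mem' := by
          intro a b ha hb
          simp only [Set.mem_ofPred_eq] at *
          rw [map_mul, ha, hb]
          exact (Commute.mul_pow (hc a b) k).symm
        inv_mem' := by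
          intro a ha
          simp only [Set.mem_ofPred_eq] at *
          rw [map_inv, ha, inv_pow] }
    rcases h W (fun x w hw => by
      change φ g (φ x w) = (φ x w) ^ k
      have hw : φ g w = w ^ k := hw
      rw [hcomm, hw, map_pow]) with e | e
    · exfalso
      have : v ∈ W := hk
      rw [e, Subgroup.mem_bot] at this
      exact hv this
    · intro a
      have : a ∈ W := e ▸ Subgroup.mem_top a
      exact this
  obtain ⟨v, hv⟩ := exists_ne (1 : V)
  rcases h (Subgroup.zpowers v) (fun g w hw => by
    obtain ⟨k, hk⟩ := hscal g
    rw [hk]; exact Subgroup.pow_mem _ hw k) with e | e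
  · exact absurd (Subgroup.zpowers_eq_bot.1 e) hv
  · exact ⟨v, fun x => (e ▸ Subgroup.mem_top x : x ∈ Subgroup.zpowers v)⟩

instance mapNormal {G : Type*} [Group G] (K L : Subgroup G) [K.Normal] [hL : L.Normal] :
    (L.map (QuotientGroup.mk' K)).Normal :=
  hL.map _ (QuotientGroup.mk'_surjective K)

/-- Conjugation action on a factor. -/
def cAct {G : Type*} [Group G] (K L : Subgroup G) [K.Normal] [L.Normal] :
    G →* MulAut (L.map (QuotientGroup.mk' K)) :=
  MulAut.conjNormal.comp (QuotientGroup.mk' K)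

theorem cAct_mk {G : Type*} [Group G] (K L : Subgroup G) [K.Normal] [L.Normal] (g : G)
    (v : L.map (QuotientGroup.mk' K)) :
    ((cAct K L g v : L.map (QuotientGroup.mk' K)) : G ⧸ K) = (g : G ⧸ K) * v * (g : G ⧸ K)⁻¹ := rfl

theorem cAct_eq_one {G : Type*} [Group G] (K L : Subgroup G) [K.Normal] [L.Normal] (g : G) :
    cAct K L g = 1 ↔ ∀ x ∈ L, x⁻¹ * (g * x * g⁻¹) ∈ K := by
  constructor
  · intro h x hx
    have := congrArg (fun f : MulAut _ => ((f ⟨(x : G ⧸ K), x, hx, rfl⟩ :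
      L.map (QuotientGroup.mk' K)) : G ⧸ K)) h
    simp only [cAct_mk] at this
    rw [← QuotientGroup.eq]
    exact this.symm
  · intro h
    ext ⟨_, x, hx, rfl⟩
    rw [cAct_mk]
    have := h x hx
    rw [← QuotientGroup.eq] at this
    exact this.symm

theorem cAct_irr {G : Type*} [Group G] (K L : Subgroup G) [K.Normal] [L.Normal]
    (h : IsChiefFactor G K L) : Irr (cAct K L) := by
  intro W hW
  let Y : Subgroup G := (W.map (Subgroup.subtype _)).comap (QuotientGroup.mk' K)
  have hYm : ∀ y, y ∈ Y ↔ ∃ w ∈ W, (w : G ⧸ K) = (y : G ⧸ K) := fun y => Iff.rfl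
  have hY : Y.Normal := by
    constructor
    intro y hy g
    rw [hYm] at hy ⊢
    obtain ⟨w, hw, e⟩ := hy
    refine ⟨_, hW g w hw, ?_⟩
    rw [cAct_mk, e]
    rfl
  have h1 : K ≤ Y := by
    intro k hk
    rw [hYm]
    exact ⟨1, W.one_mem, ((QuotientGroup.eq_one_iff k).2 hk).symm⟩
  have h2 : Y ≤ L := by
    intro y hy
    rw [hYm] at hy
    obtain ⟨⟨_, x, hx, rfl⟩, hw, e⟩ := hy
    have e' : (x : G ⧸ K) = (y : G ⧸ K) := e
    rw [QuotientGroup.eq] at e'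
    have := L.mul_mem hx (h.2.2.1.le e')
    simpa using this
  rcases h.2.2.2 Y hY h1 h2 with e | e
  · left
    rw [eq_bot_iff]
    rintro ⟨_, x, hx, rfl⟩ hw
    have : x ∈ Y := (hYm x).2 ⟨_, hw, rfl⟩
    rw [e] at this
    rw [Subgroup.mem_bot]
    ext
    exact (QuotientGroup.eq_one_iff x).2 this
  · right
    rw [eq_top_iff]
    rintro ⟨_, x, hx, rfl⟩ -
    have : x ∈ Y := e ▸ hx
    obtain ⟨w, hw, e'⟩ := (hYm x).1 this
    have : w = ⟨_, x, hx, rfl⟩ := Subtype.ext e'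
    exact this ▸ hw

theorem factor_nontrivial {G : Type*} [Group G] (K L : Subgroup G) [K.Normal]
    (h : K < L) : Nontrivial (L.map (QuotientGroup.mk' K)) := by
  obtain ⟨x, hx, hxK⟩ := SetLike.exists_of_lt h
  refine ⟨⟨⟨(x : G ⧸ K), x, hx, rfl⟩, 1, fun e => hxK ?_⟩⟩
  exact (QuotientGroup.eq_one_iff x).1 (congrArg Subtype.val e)

theorem factor_cyclic {G : Type*} [Group G] (K L : Subgroup G) [K.Normal] :
    CyclicFactor K L ↔ IsCyclic (L.map (QuotientGroup.mk' K)) := by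
  constructor
  · rintro ⟨g, hg, h⟩
    refine ⟨⟨(g : G ⧸ K), g, hg, rfl⟩, ?_⟩
    rintro ⟨_, x, hx, rfl⟩
    obtain ⟨n, hn⟩ := h x hx
    refine ⟨n, ?_⟩
    ext
    rw [← QuotientGroup.eq] at hn
    exact hn
  · rintro ⟨⟨_, g, hg, rfl⟩, h⟩
    refine ⟨g, hg, fun x hx => ?_⟩
    obtain ⟨n, hn⟩ := h ⟨(x : G ⧸ K), x, hx, rfl⟩
    refine ⟨n, ?_⟩
    rw [← QuotientGroup.eq]
    exact congrArg Subtype.val hn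

theorem factor_pgroup {G : Type*} [Group G] (K L E : Subgroup G) [K.Normal] (hLE : L ≤ E)
    {p : ℕ} (hE : IsPGroup p E) : IsPGroup p (L.map (QuotientGroup.mk' K)) :=
  (hE.to_le hLE).map _

/-- Kernel of the action on a chief factor. -/
def cKer {G : Type*} [Group G] {K L : Subgroup G} (h : IsChiefFactor G K L) : Subgroup G :=
  have := h.1
  have := h.2.1
  (cAct K L).ker

theorem conj_pow_of {G : Type*} [Group G] (h x k : G) (hk : h * k * h⁻¹ = k)
    (e : x⁻¹ * (h * x * h⁻¹) = k) (m : ℕ) : h ^ m * x * (h ^ m)⁻¹ = x * k ^ m := by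
  have e' : h * x * h⁻¹ = x * k := by rw [← e]; group
  induction m with
  | zero => simp
  | succ m ih =>
    have hkm : h * k ^ m * h⁻¹ = k ^ m := by rw [← conj_pow, hk]
    calc h ^ (m + 1) * x * (h ^ (m + 1))⁻¹ = h * (h ^ m * x * (h ^ m)⁻¹) * h⁻¹ := by
          rw [pow_succ']; group
      _ = (h * x * h⁻¹) * (h * k ^ m * h⁻¹) := by rw [ih]; group
      _ = x * k ^ (m + 1) := by rw [hkm, e', pow_succ', mul_assoc]

theorem stab_pow {G : Type*} [Group G] [Finite G] {p : ℕ} (hp : p.Prime) {E : Subgroup G}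
    (hEp : IsPGroup p E) (g : G)
    (hg : ∀ K L : Subgroup G, IsChiefFactor G K L → L ≤ E →
      ∀ m : ℕ, ∀ x ∈ L, x⁻¹ * (g ^ m * x * (g ^ m)⁻¹) ∈ K) (N : Subgroup G) :
    N.Normal → N ≤ E → ∃ n : ℕ, ∀ x ∈ N, g ^ p ^ n * x * (g ^ p ^ n)⁻¹ = x := by
  have := Fact.mk hp
  induction N using WellFoundedLT.induction with
  | ind N ih =>
    intro hN hNE
    by_cases hb : N = ⊥
    · subst hb
      refine ⟨0, fun x hx => ?_⟩
      rw [Subgroup.mem_bot] at hx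
      simp [hx]
    have hne : {K : Subgroup G | K.Normal ∧ K < N}.Nonempty :=
      ⟨⊥, inferInstance, bot_lt_iff_ne_bot.2 hb⟩
    obtain ⟨K, hK⟩ := (Set.toFinite _).exists_maximal hne
    have hchief : IsChiefFactor G K N := by
      refine ⟨hK.1.1, hN, hK.1.2, fun Y hY h1 h2 => ?_⟩
      by_cases e : Y = N
      · exact Or.inr e
      · exact Or.inl (le_antisymm (hK.2 ⟨hY, lt_of_le_of_ne h2 e⟩ h1) h1)
    obtain ⟨n, hn⟩ := ih K hK.1.2 hK.1.1 (hK.1.2.le.trans hNE)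
    obtain ⟨c, hc⟩ := IsPGroup.iff_card.1 (hEp.to_le (hK.1.2.le.trans hNE))
    refine ⟨n + c, fun x hx => ?_⟩
    have hk := hg K N hchief hNE (p ^ n) x hx
    have := conj_pow_of (g ^ p ^ n) x _ (hn _ hk) rfl (p ^ c)
    rw [← pow_mul, ← pow_add] at this
    have h1 := congrArg Subtype.val (pow_card_eq_one' (x := (⟨_, hk⟩ : K)))
    rw [this, ← hc]
    exact mul_eq_left.2 h1

/-- Let `E` be a normal `p`-subgroup of a finite group `G` and `C = C_G(E)`.
Then `E ≤ Z_𝔘(G)` iff `(G/C)^{𝔄(p-1)} ≤ O_p(G/C)`, i.e. iff there is a normal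
subgroup `P` of `G` containing `C` with `P/C` a `p`-group and `G/P` abelian of
exponent dividing `p - 1`. -/
theorem stmt9 {G : Type*} [Group G] [Finite G] (p : ℕ) (hp : p.Prime)
    (E : Subgroup G) (hE : E.Normal) (hEp : IsPGroup p E) :
    E ≤ UHypercentre G ↔
      ∃ P : Subgroup G, P.Normal ∧ Subgroup.centralizer (E : Set G) ≤ P ∧
        (∀ g ∈ P, ∃ n : ℕ, g ^ p ^ n ∈ Subgroup.centralizer (E : Set G)) ∧
        (∀ x y : G, x * y * x⁻¹ * y⁻¹ ∈ P) ∧ (∀ x : G, x ^ (p - 1) ∈ P) := by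
  constructor
  · intro hEU
    have hcyc := uEmb_of_le hEU
    let P : Subgroup G := ⨅ (K : Subgroup G) (L : Subgroup G)
      (h : IsChiefFactor G K L) (_ : L ≤ E), cKer h
    have hPm : ∀ g, g ∈ P ↔ ∀ (K L : Subgroup G) (h : IsChiefFactor G K L), L ≤ E →
        g ∈ cKer h := by
      intro g
      simp only [P, Subgroup.mem_iInf]
    have hker : ∀ (K L : Subgroup G) (h : IsChiefFactor G K L) (g : G), g ∈ cKer h ↔
        ∀ x ∈ L, x⁻¹ * (g * x * g⁻¹) ∈ K := by
      intro K L h g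
      have := h.1
      have := h.2.1
      exact cAct_eq_one K L g
    have hmain : ∀ (K L : Subgroup G) (h : IsChiefFactor G K L), L ≤ E →
        (∀ x y : G, x * y * x⁻¹ * y⁻¹ ∈ cKer h) ∧ ∀ x : G, x ^ (p - 1) ∈ cKer h := by
      intro K L h hL
      have := h.1
      have := h.2.1
      have := factor_nontrivial K L h.2.2.1
      exact (cAct_irr K L h).cyclic_case hp (factor_pgroup K L E hL hEp)
        ((factor_cyclic K L).1 (hcyc K L h hL))
    refine ⟨P, ?_, ?_, ?_, ?_, ?_⟩
    · refine Subgroup.normal_iInf_normal fun K => Subgroup.normal_iInf_normal fun L =>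
        Subgroup.normal_iInf_normal fun h => Subgroup.normal_iInf_normal fun _ => ?_
      unfold cKer
      infer_instance
    · intro g hg
      rw [hPm]
      intro K L h hL
      rw [hker]
      intro x hx
      have := Subgroup.mem_centralizer_iff.1 hg x (hL hx)
      rw [← this]
      simp
    · intro g hg
      obtain ⟨n, hn⟩ := stab_pow hp hEp g (fun K L h hL m => by
        have := (hPm _).1 (P.pow_mem hg m) K L h hL
        exact (hker K L h _).1 this) E hE le_rfl
      refine ⟨n, Subgroup.mem_centralizer_iff.2 fun x hx => ?_⟩
      exact (mul_inv_eq_iff_eq_mul.1 (hn x hx)).symm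
    · intro x y
      exact (hPm _).2 fun K L h hL => (hmain K L h hL).1 x y
    · intro x
      exact (hPm _).2 fun K L h hL => (hmain K L h hL).2 x
  · rintro ⟨P, hPn, -, h1, h2, h3⟩
    refine le_iSup₂_of_le (f := fun (N : Subgroup G) _ => N) E ⟨hE, fun K L h hL => ?_⟩ le_rfl
    have := h.1
    have := h.2.1
    have := factor_nontrivial K L h.2.2.1
    rw [factor_cyclic]
    refine (cAct_irr K L h).cyclic hp (factor_pgroup K L E hL hEp) P hPn ?_ h2 h3
    intro g hg
    obtain ⟨n, hn⟩ := h1 g hg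
    refine ⟨n, (cAct_eq_one K L _).2 fun x hx => ?_⟩
    have := Subgroup.mem_centralizer_iff.1 hn x (hL hx)
    rw [← this]
    simp
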